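/- arXiv:1704.05304 — 4 statements merged into one kernel-verified Lean document; each statement's English description precedes it below -/
import Mathlib

section
/- Let V be a virtually cyclic group. Then V has bCyc if and only if V is finite, or V is infinite cyclic, or V is isomorphic to the infinite dihedral group ℤ ⋊ ℤ/2 = ⟨ t, s ∣ s² = 1, s t s = t^{-1} ⟩. -/
/-- A group is *virtually cyclic* if it has a cyclic subgroup of finite index. -/
def VirtuallyCyclic (G : Type*) [Group G] : Prop :=
  ∃ H : Subgroup G, IsCyclic H ∧ H.FiniteIndex

/-- A group has *bVCyc* if there are finitely many virtually cyclic subgroups such that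
every element lies in a conjugate of one of them. -/
def bVCyc (G : Type*) [Group G] : Prop :=
  ∃ 𝒱 : Finset (Subgroup G), (∀ V ∈ 𝒱, VirtuallyCyclic V) ∧
    ∀ g : G, ∃ V ∈ 𝒱, ∃ x : G, x * g * x⁻¹ ∈ V

/-- A group has *BVC* if there are finitely many virtually cyclic subgroups such that
every virtually cyclic subgroup is contained in a conjugate of one of them. -/
def BVC (G : Type*) [Group G] : Prop :=
  ∃ 𝒱 : Finset (Subgroup G), (∀ V ∈ 𝒱, VirtuallyCyclic V) ∧
    ∀ W : Subgroup G, VirtuallyCyclic W →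
      ∃ V ∈ 𝒱, ∃ x : G, ∀ w ∈ W, x * w * x⁻¹ ∈ V

/-- A group has *bCyc* if there are finitely many elements g₁, …, gₙ such that every
element is conjugate to a power of some gᵢ. -/
def bCyc (G : Type*) [Group G] : Prop :=
  ∃ s : Finset G, ∀ g : G, ∃ a ∈ s, ∃ k : ℤ, IsConj g (a ^ k)

/-- An element is *primitive* if it cannot be written as a proper power. -/
def Primitive {G : Type*} [Group G] (g : G) : Prop :=
  ∀ (h : G) (n : ℤ), g = h ^ n → n = 1 ∨ n = -1

/-!
For the reverse implication the infinite dihedral group needs only the elements `r 1`, `sr 0` and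
`sr 1`: conjugating by a rotation changes the index of a reflection by any prescribed even number.

Conversely let `V` be infinite, virtually cyclic and bCyc. It has a normal infinite cyclic subgroup
`⟨c⟩` of finite index `n`, and every `a` satisfies `a ^ n = c ^ α a` for some integer `α a`. Let
`e` be the product of the nonzero `α a`, with `a` running over the finite set given by bCyc. If `g`
satisfies `g ^ n = c ^ (e * n)` and is conjugate to `a ^ j`, then comparing `n`-th powers gives
`e * n = ± α a * j`. Since `α a ∣ e`, it follows that `n ∣ j`, so `a ^ j` and its conjugate `g` lie
in `⟨c⟩`. Applied to `g = k * c ^ e` this shows that the centralizer of `c` contains no torsion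
element `k ≠ 1`.

The centralizer has a central cyclic subgroup of finite index, so being torsion-free it embeds into
that subgroup by the transfer, and is cyclic. Its index divides 2, since conjugation sends `c` to
`c` or `c⁻¹`. Elements outside it invert `c`, hence have finite order, and their squares lie in
the centralizer; so they are involutions, and `V` is infinite dihedral if there are any.
-/

section

variable {G H : Type*} [Group G] [Group H]

open Subgroup

theorem isCyclic_of_le_center_of_torsionFree {A : Subgroup G} [IsCyclic A] [A.FiniteIndex]
    (hA : A ≤ center G) (htf : ∀ g : G, IsOfFinOrder g → g = 1) : IsCyclic G := by
  let : CommGroup A := IsCyclic.commGroup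
  have hconj (g : G) (k : ℕ) (g₀ : G) (hmem : g₀⁻¹ * g ^ k * g₀ ∈ A) :
      g₀⁻¹ * g ^ k * g₀ = g ^ k := by
    rw [← mul_left_inj g₀, ← mem_center_iff.1 (hA hmem) g₀]
    group
  have htransfer (g : G) : ((MonoidHom.id A).transfer g : G) = g ^ A.index :=
    congrArg Subtype.val (MonoidHom.transfer_eq_pow (MonoidHom.id A) g (hconj g))
  refine isCyclic_of_injective (MonoidHom.id A).transfer
    ((injective_iff_map_eq_one _).2 fun g hg => htf g ?_)
  refine IsOfFinOrder.of_pow (n := A.index) ?_ FiniteIndex.index_ne_zero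
  rw [← htransfer, hg, OneMemClass.coe_one]
  exact IsOfFinOrder.one

/-- The homomorphism out of a dihedral group that restricts to `f` on the rotations and maps the
reflection `sr 0` to `s`. The hypothesis on `s` asks the reflections to become involutions, which
encodes both relations `s ^ 2 = 1` and `s * f i * s⁻¹ = (f i)⁻¹`. -/
def dihedralLift {n : ℕ} (f : Multiplicative (ZMod n) →* G) (s : G)
    (hs : ∀ i, (s * f i) ^ 2 = 1) : DihedralGroup n →* G :=
  have hss : s * s = 1 := by simpa [pow_two] using hs 1
  have hcomm (i : ZMod n) : f (.ofAdd i) * s = s * f (.ofAdd (-i)) := by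
    rw [ofAdd_neg, map_inv, eq_mul_inv_iff_mul_eq]
    have h := hs (.ofAdd i)
    rw [pow_two, mul_assoc, ← mul_assoc (f _)] at h
    rw [eq_inv_of_mul_eq_one_right h, inv_eq_of_mul_eq_one_right hss]
  MonoidHom.mk'
    (fun
      | .r i => f (.ofAdd i)
      | .sr i => s * f (.ofAdd i)) <| by
    rintro (i | i) (j | j)
    · exact map_mul f _ _
    · change s * f (.ofAdd (j - i)) = f (.ofAdd i) * (s * f (.ofAdd j))
      rw [← mul_assoc, hcomm, mul_assoc, ← map_mul, ← ofAdd_add, neg_add_eq_sub]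
    · change s * f (.ofAdd (i + j)) = s * f (.ofAdd i) * f (.ofAdd j)
      rw [mul_assoc, ← map_mul, ← ofAdd_add]
    · change f (.ofAdd (j - i)) = s * f (.ofAdd i) * (s * f (.ofAdd j))
      rw [mul_assoc, ← mul_assoc (f _) s, hcomm, mul_assoc s, ← mul_assoc s, hss, one_mul,
        ← map_mul, ← ofAdd_add, neg_add_eq_sub]

theorem nonempty_mulEquiv_dihedralGroup_of_index_eq_two {K : Subgroup G} [hK : IsCyclic K]
    (hindex : K.index = 2) (hinv : ∀ g ∉ K, g ^ 2 = 1) :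
    Nonempty (G ≃* DihedralGroup (Nat.card K)) := by
  obtain ⟨s, hs, -⟩ := index_eq_two_iff_exists_notMem_and.1 hindex
  let e := zmodCyclicMulEquiv hK
  have hrefl : ∀ k : K, s * k ∉ K := fun k h => hs ((K.mul_mem_cancel_right k.2).1 h)
  let φ := dihedralLift (K.subtype.comp e.toMonoidHom) s fun i => hinv _ (hrefl (e i))
  have hφ_r (i) : φ (.r i) = e (.ofAdd i) := rfl
  have hφ_sr (i) : φ (.sr i) = s * e (.ofAdd i) := rfl
  refine ⟨(MulEquiv.ofBijective φ ⟨(injective_iff_map_eq_one φ).2 ?_, fun g => ?_⟩).symm⟩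
  · rintro (i | i) hi
    · rw [hφ_r, OneMemClass.coe_eq_one, map_eq_one_iff e e.injective] at hi
      exact congrArg DihedralGroup.r (ofAdd_eq_one.1 hi)
    · exact absurd (by rw [← hφ_sr, hi]; exact K.one_mem) (hrefl (e (.ofAdd i)))
  · by_cases hg : g ∈ K
    · refine ⟨.r (e.symm ⟨g, hg⟩).toAdd, ?_⟩
      rw [hφ_r, ofAdd_toAdd, e.apply_symm_apply]
    · have hsg : s⁻¹ * g ∈ K := by
        rw [mul_mem_iff_of_index_two hindex, inv_mem_iff]
        exact iff_of_false hs hg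
      refine ⟨.sr (e.symm ⟨s⁻¹ * g, hsg⟩).toAdd, ?_⟩
      rw [hφ_sr, ofAdd_toAdd, e.apply_symm_apply, mul_inv_cancel_left]

theorem isConj_sr_add_two_mul (n : ℕ) (i m : ZMod n) :
    IsConj (DihedralGroup.sr (i + 2 * m)) (DihedralGroup.sr i) :=
  isConj_iff.2 ⟨.r m, by
    rw [DihedralGroup.inv_r, DihedralGroup.r_mul_sr, DihedralGroup.sr_mul_r]
    congr 1
    ring⟩

theorem bCyc_of_finite [Finite G] : bCyc G := by
  have := Fintype.ofFinite G
  exact ⟨Finset.univ, fun g => ⟨g, Finset.mem_univ g, 1, by rw [zpow_one]⟩⟩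

theorem bCyc_of_isCyclic [IsCyclic G] : bCyc G := by
  obtain ⟨g, hg⟩ := IsCyclic.exists_generator (α := G)
  refine ⟨{g}, fun x => ⟨g, Finset.mem_singleton_self g, ?_⟩⟩
  obtain ⟨k, rfl⟩ := hg x
  exact ⟨k, IsConj.refl _⟩

theorem bCyc_dihedralGroup (n : ℕ) : bCyc (DihedralGroup n) := by
  classical
  refine ⟨{.r 1, .sr 0, .sr 1}, ?_⟩
  rintro (i | i) <;> obtain ⟨k, rfl⟩ := ZMod.intCast_surjective i
  · exact ⟨.r 1, by simp, k, by rw [DihedralGroup.r_one_zpow]⟩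
  · obtain ⟨m, rfl | rfl⟩ := Int.even_or_odd' k
    · refine ⟨.sr 0, by simp, 1, ?_⟩
      simpa using isConj_sr_add_two_mul n 0 m
    · refine ⟨.sr 1, by simp, 1, ?_⟩
      simpa [add_comm] using isConj_sr_add_two_mul n 1 m

theorem bCyc.of_surjective {f : G →* H} (hf : Function.Surjective f) (hG : bCyc G) : bCyc H := by
  classical
  obtain ⟨S, hS⟩ := hG
  refine ⟨S.image f, fun h => ?_⟩
  obtain ⟨g, rfl⟩ := hf h
  obtain ⟨a, ha, k, hk⟩ := hS g
  exact ⟨f a, Finset.mem_image_of_mem f ha, k, map_zpow f a k ▸ f.map_isConj hk⟩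

theorem VirtuallyCyclic.exists_normal_zpowers (hG : VirtuallyCyclic G) :
    ∃ c : G, (zpowers c).Normal ∧ (zpowers c).FiniteIndex := by
  obtain ⟨K, hK, hindex⟩ := hG
  have : IsCyclic K.normalCore := isCyclic_of_injective (inclusion K.normalCore_le)
    (inclusion_injective K.normalCore_le)
  obtain ⟨c, hc⟩ := K.normalCore.isCyclic_iff_exists_zpowers_eq_top.1 this
  exact ⟨c, hc ▸ inferInstance, hc ▸ inferInstance⟩

theorem not_isOfFinOrder_of_finiteIndex_zpowers [Infinite G] (c : G)
    [hindex : (zpowers c).FiniteIndex] : ¬IsOfFinOrder c := fun hc =>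
  not_finite_iff_infinite.2 ‹Infinite G›
    ((zpowers c).finite_iff_finite_and_finiteIndex.2 ⟨hc.finite_zpowers, hindex⟩)

variable {c : G}

theorem eq_one_of_mem_zpowers_of_isOfFinOrder (hc : ¬IsOfFinOrder c) {g : G} (hg : g ∈ zpowers c)
    (hfin : IsOfFinOrder g) : g = 1 := by
  obtain ⟨m, rfl⟩ := mem_zpowers_iff.1 hg
  obtain ⟨l, hl, hpow⟩ := isOfFinOrder_iff_zpow_eq_one.1 hfin
  have hml : m * l = 0 := injective_zpow_iff_not_isOfFinOrder.2 hc <| by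
    simpa only [zpow_mul, zpow_zero] using hpow
  rw [(mul_eq_zero.1 hml).resolve_right hl, zpow_zero]

variable [hN : (zpowers c).Normal]

theorem conj_eq_self_or_inv (hc : ¬IsOfFinOrder c) (g : G) :
    g * c * g⁻¹ = c ∨ g * c * g⁻¹ = c⁻¹ := by
  have h : zpowers c = zpowers (g * c * g⁻¹) := by
    simpa [MonoidHom.map_zpowers] using (Normal.map_conj_eq (zpowers c) g).symm
  exact ((zpowers_eq_zpowers_iff hc).1 h).imp Eq.symm Eq.symm

theorem eq_or_eq_neg_of_isConj_zpow (hc : ¬IsOfFinOrder c) {i j : ℤ}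
    (h : IsConj (c ^ i) (c ^ j)) : i = j ∨ i = -j := by
  have hinj := injective_zpow_iff_not_isOfFinOrder.2 hc
  obtain ⟨g, hg⟩ := isConj_iff.1 h
  rw [← conj_zpow] at hg
  rcases conj_eq_self_or_inv hc g with hself | hinv
  · exact .inl (hinj (by rwa [hself] at hg))
  · exact .inr (neg_eq_iff_eq_neg.1 (hinj (by rwa [hinv, inv_zpow'] at hg)))

theorem index_centralizer_dvd_two (hc : ¬IsOfFinOrder c) : (centralizer {c}).index ∣ 2 := by
  have hmem {g : G} : g ∈ centralizer {c} ↔ g * c * g⁻¹ = c := by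
    rw [mem_centralizer_singleton_iff, mul_inv_eq_iff_eq_mul]
  by_cases htop : ∀ g, g ∈ centralizer {c}
  · rw [index_eq_one.2 ((eq_top_iff' _).2 htop)]
    exact one_dvd 2
  obtain ⟨s, hs⟩ := not_forall.1 htop
  refine index_dvd_two_iff'.2 ⟨s, fun g => or_iff_not_imp_right.2 fun hg => ?_⟩
  have hs_inv := (conj_eq_self_or_inv hc s).resolve_left (hmem.not.1 hs)
  have hg_inv := (conj_eq_self_or_inv hc g).resolve_left (hmem.not.1 hg)
  rw [hmem]
  calc s * g * c * (s * g)⁻¹ = s * (g * c * g⁻¹) * s⁻¹ := by group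
    _ = c := by rw [hg_inv, ← conj_inv, hs_inv, inv_inv]

variable [(zpowers c).FiniteIndex]

theorem isOfFinOrder_of_notMem_centralizer (hc : ¬IsOfFinOrder c) {g : G}
    (hg : g ∉ centralizer {c}) : IsOfFinOrder g := by
  have hinv : g * c * g⁻¹ = c⁻¹ := (conj_eq_self_or_inv hc g).resolve_left <| by
    rwa [mul_inv_eq_iff_eq_mul, ← mem_centralizer_singleton_iff]
  obtain ⟨m, hm⟩ := mem_zpowers_iff.1 ((zpowers c).pow_index_mem g)
  -- `c ^ m` is inverted by `g`, and fixed by `g` since it is a power of `g`.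
  have hfix : c ^ (-m) = c ^ m := by
    rw [← inv_zpow', ← hinv, conj_zpow, hm, ← pow_succ', pow_succ, mul_inv_cancel_right]
  have hm_zero : m = 0 :=
    self_eq_neg.1 (injective_zpow_iff_not_isOfFinOrder.2 hc hfix).symm
  refine IsOfFinOrder.of_pow (n := (zpowers c).index) ?_ FiniteIndex.index_ne_zero
  rw [← hm, hm_zero, zpow_zero]
  exact IsOfFinOrder.one

theorem bCyc.exists_forall_mem_zpowers (hG : bCyc G) (hc : ¬IsOfFinOrder c) :
    ∃ e : ℤ, ∀ g : G, g ^ (zpowers c).index = c ^ (e * (zpowers c).index) → g ∈ zpowers c := by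
  set n := (zpowers c).index with hn
  have hn_zero : (n : ℤ) ≠ 0 := Nat.cast_ne_zero.2 FiniteIndex.index_ne_zero
  obtain ⟨S, hS⟩ := hG
  choose α hα using fun a => mem_zpowers_iff.1 ((zpowers c).pow_index_mem a)
  rw [← hn] at hα
  let e := ∏ a ∈ S with α a ≠ 0, α a
  have he : e ≠ 0 := Finset.prod_ne_zero_iff.2 fun a ha => (Finset.mem_filter.1 ha).2
  refine ⟨e, fun g hg => ?_⟩
  obtain ⟨a, ha, j, hgj⟩ := hS g
  have hconj : IsConj (c ^ (e * n)) (c ^ (α a * j)) := by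
    rw [← hg, zpow_mul, hα, ← zpow_natCast a, zpow_comm, zpow_natCast]
    exact hgj.pow n
  have hexp : e * n = α a * j ∨ e * n = -(α a * j) := eq_or_eq_neg_of_isConj_zpow hc hconj
  have hαa : α a ≠ 0 := fun h => mul_ne_zero he hn_zero (by simpa [h] using hexp)
  have hdvd : α a ∣ e := Finset.dvd_prod_of_mem α (Finset.mem_filter.2 ⟨ha, hαa⟩)
  obtain ⟨q, rfl⟩ : (n : ℤ) ∣ j := by
    rw [← mul_dvd_mul_iff_left hαa]
    exact (mul_dvd_mul_right hdvd n).trans (hexp.elim (·.dvd) fun h => dvd_neg.1 h.dvd)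
  have hmem : a ^ (n * q) ∈ zpowers c := by
    rw [zpow_mul, zpow_natCast]
    exact zpow_mem ((zpowers c).pow_index_mem a) q
  obtain ⟨x, rfl⟩ := isConj_iff.1 hgj.symm
  exact hN.conj_mem _ hmem x

theorem bCyc.eq_one_of_commute_of_isOfFinOrder (hG : bCyc G) (hc : ¬IsOfFinOrder c) {k : G}
    (hcomm : Commute k c) (hk : IsOfFinOrder k) : k = 1 := by
  obtain ⟨e, he⟩ := hG.exists_forall_mem_zpowers hc
  have hpow : k ^ (zpowers c).index = 1 :=
    eq_one_of_mem_zpowers_of_isOfFinOrder hc ((zpowers c).pow_index_mem k) hk.pow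
  have hmem : k * c ^ e ∈ zpowers c := he _ <| by
    rw [(hcomm.zpow_right e).mul_pow, hpow, one_mul, zpow_mul, zpow_natCast]
  rw [(zpowers c).mul_mem_cancel_right (zpow_mem_zpowers c e)] at hmem
  exact eq_one_of_mem_zpowers_of_isOfFinOrder hc hmem hk

theorem bCyc.isCyclic_centralizer (hG : bCyc G) (hc : ¬IsOfFinOrder c) :
    IsCyclic (centralizer {c}) := by
  have hle : zpowers c ≤ centralizer {c} := zpowers_le.2 (mem_centralizer_singleton_iff.2 rfl)
  have : IsCyclic ((zpowers c).subgroupOf (centralizer {c})) :=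
    (subgroupOfEquivOfLe hle).isCyclic.2 inferInstance
  refine isCyclic_of_le_center_of_torsionFree (A := (zpowers c).subgroupOf (centralizer {c})) ?_
    fun z hz => ?_
  · rintro z hz
    obtain ⟨m, hm⟩ := mem_zpowers_iff.1 (mem_subgroupOf.1 hz)
    refine mem_center_iff.2 fun y => Subtype.ext ?_
    have hy : Commute (y : G) c := mem_centralizer_singleton_iff.1 y.2
    simpa only [coe_mul, ← hm] using (hy.zpow_right m).eq
  · exact Subtype.ext <| hG.eq_one_of_commute_of_isOfFinOrder hc
      (mem_centralizer_singleton_iff.1 z.2) ((centralizer {c}).subtype.isOfFinOrder hz)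

theorem bCyc.sq_eq_one_of_notMem_centralizer (hG : bCyc G) (hc : ¬IsOfFinOrder c)
    (hindex : (centralizer {c}).index = 2) {g : G} (hg : g ∉ centralizer {c}) : g ^ 2 = 1 :=
  hG.eq_one_of_commute_of_isOfFinOrder hc
    (mem_centralizer_singleton_iff.1 (sq_mem_of_index_two hindex g))
    (isOfFinOrder_of_notMem_centralizer hc hg).pow

theorem bCyc.isCyclic_or_nonempty_mulEquiv_dihedralGroup [Infinite G] (hG : bCyc G)
    (hvc : VirtuallyCyclic G) : IsCyclic G ∨ Nonempty (G ≃* DihedralGroup 0) := by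
  obtain ⟨c, hN, hF⟩ := hvc.exists_normal_zpowers
  have hc := not_isOfFinOrder_of_finiteIndex_zpowers c
  have hcyc := hG.isCyclic_centralizer hc
  refine ((Nat.dvd_prime Nat.prime_two).1 (index_centralizer_dvd_two hc)).imp (fun hone => ?_)
    fun htwo => ?_
  · rw [index_eq_one.1 hone] at hcyc
    exact topEquiv.isCyclic.1 hcyc
  · have hcard : Nat.card (centralizer {c}) = 0 := by
      have hmul := (centralizer {c}).card_mul_index
      rw [Nat.card_eq_zero_of_infinite (α := G), htwo] at hmul
      exact (mul_eq_zero.1 hmul).resolve_right two_ne_zero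
    rw [← hcard]
    exact nonempty_mulEquiv_dihedralGroup_of_index_eq_two htwo fun _ =>
      hG.sq_eq_one_of_notMem_centralizer hc htwo

end

/-- A virtually cyclic group has bCyc if and only if it is finite, infinite cyclic or
infinite dihedral. -/
theorem stmt_7 {V : Type*} [Group V] (hvc : VirtuallyCyclic V) :
    bCyc V ↔ (Finite V ∨ (Infinite V ∧ IsCyclic V) ∨ Nonempty (V ≃* DihedralGroup 0)) := by
  constructor
  · intro hV
    rcases finite_or_infinite V with hfin | hinf
    · exact .inl hfin
    · exact .inr <| (hV.isCyclic_or_nonempty_mulEquiv_dihedralGroup hvc).imp_left (⟨hinf, ·⟩)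
  · rintro (hfin | ⟨-, hcyc⟩ | ⟨⟨f⟩⟩)
    · exact bCyc_of_finite
    · exact bCyc_of_isCyclic
    · exact (bCyc_dihedralGroup 0).of_surjective (f := f.symm.toMonoidHom) f.symm.surjective
end

section
/- Let G be a group in which the centralizer of every non-trivial element is an infinite cyclic group. Let a, b ∈ G and suppose a^n = b^m for some nonzero integers m, n. If a is primitive, then b lies in the cyclic subgroup generated by a. -/
/-!
A primitive element of a cyclic subgroup `H` equals `c` or `c⁻¹` for any generator `c` of `H`, and
so generates `H` itself. The centralizer of `a ^ n = b ^ m` contains both `a` and `b`.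
-/

namespace Primitive

variable {G : Type*} [Group G] {a : G}

lemma zpow_ne_one (ha : Primitive a) {n : ℤ} (hn : n ≠ 0) : a ^ n ≠ 1 := by
  intro h
  -- An exponent `n + 1` would leave the case `n = -2` open, whereas `3 * n + 1 = -1` is impossible.
  have := ha a (3 * n + 1) (by rw [zpow_add_one, zpow_mul', h, one_zpow, one_mul])
  omega

lemma zpowers_eq_of_mem (ha : Primitive a) {H : Subgroup G} [IsCyclic H] (haH : a ∈ H) :
    Subgroup.zpowers a = H := by
  obtain ⟨c, rfl⟩ := H.isCyclic_iff_exists_zpowers_eq_top.mp ‹_›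
  obtain ⟨k, rfl⟩ := Subgroup.mem_zpowers_iff.mp haH
  rcases ha c k rfl with rfl | rfl
  · rw [zpow_one]
  · rw [zpow_neg_one, Subgroup.zpowers_inv]

end Primitive

theorem stmt_8_general {G : Type*} [Group G] {a b : G} {n : ℤ} (ha : Primitive a)
    (hcen : IsCyclic (Subgroup.centralizer {a ^ n})) (hab : Commute b (a ^ n)) :
    b ∈ Subgroup.zpowers a := by
  have haC : a ∈ Subgroup.centralizer {a ^ n} :=
    Subgroup.mem_centralizer_singleton_iff.mpr (Commute.self_zpow a n).eq
  rw [ha.zpowers_eq_of_mem haC]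
  exact Subgroup.mem_centralizer_singleton_iff.mpr hab.eq

/-- In a group where centralizers of non-trivial elements are infinite cyclic, if a
primitive element a satisfies aⁿ = bᵐ with n, m ≠ 0, then b ∈ ⟨a⟩. -/
theorem stmt_8 {G : Type*} [Group G]
    (hcen : ∀ g : G, g ≠ 1 →
      IsCyclic (Subgroup.centralizer {g}) ∧ Infinite (Subgroup.centralizer {g}))
    (a b : G) (n m : ℤ) (hn : n ≠ 0) (hm : m ≠ 0) (h : a ^ n = b ^ m)
    (ha : Primitive a) : b ∈ Subgroup.zpowers a := by
  have hcyc := (hcen (a ^ n) (ha.zpow_ne_one hn)).1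
  exact stmt_8_general ha hcyc (h ▸ Commute.self_zpow b m)
end

section
/- Let G be a group and let a, b ∈ G be two primitive elements. Let A = ⟨a⟩ and B = ⟨b⟩ be the cyclic subgroups they generate and let φ : A → B be the isomorphism sending a to b. Then any primitive element g ∈ G, considered via the canonical embedding as an element of the HNN extension G∗_{φ} = ⟨ G, t ∣ t^{-1} a t = b ⟩, is still primitive in G∗_{φ}. -/
namespace HNNWord

open HNNExtension HNNExtension.NormalWord

section Words

variable {G : Type*} [Group G] {A B : Subgroup G} (φ : A ≃* B)

/-- The product of the syllables `t ^ u * g` over the pairs `(u, g)` of a list. This is Mathlib's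
`NormalWord.ReducedWord.prod` for a word with head `1`, without requiring the word to be reduced. -/
def syllableProd (l : List (ℤˣ × G)) : HNNExtension G A B φ :=
  (l.map fun x => t ^ (x.1 : ℤ) * of x.2).prod

variable (A B) in
/-- A list of syllables is reduced if it has no pinch `t ^ u * g * t ^ (-u)` with
`g ∈ toSubgroup A B u`; this is the condition in `NormalWord.ReducedWord`. -/
def IsReduced (l : List (ℤˣ × G)) : Prop :=
  l.IsChain fun x y => x.2 ∈ toSubgroup A B x.1 → x.1 = y.1

variable (A B) in
/-- A list of syllables is cyclically reduced if it is reduced and its last and first syllables do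
not form a pinch either. -/
def IsCyclicallyReduced (l : List (ℤˣ × G)) : Prop :=
  IsReduced A B l ∧ ∀ x ∈ l.getLast?, ∀ y ∈ l.head?, x.2 ∈ toSubgroup A B x.1 → x.1 = y.1

@[simp]
theorem syllableProd_nil : syllableProd φ [] = 1 := rfl

@[simp]
theorem syllableProd_cons (u : ℤˣ) (g : G) (l : List (ℤˣ × G)) :
    syllableProd φ ((u, g) :: l) = t ^ (u : ℤ) * of g * syllableProd φ l := by
  simp [syllableProd]

@[simp]
theorem syllableProd_append (l l' : List (ℤˣ × G)) :
    syllableProd φ (l ++ l') = syllableProd φ l * syllableProd φ l' := by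
  simp [syllableProd]

theorem syllableProd_flatten_replicate (m : ℕ) (l : List (ℤˣ × G)) :
    syllableProd φ (List.replicate m l).flatten = syllableProd φ l ^ m := by
  induction m with
  | zero => simp
  | succ m ih => rw [List.replicate_succ, List.flatten_cons, syllableProd_append, ih, pow_succ']

theorem exists_isReduced_eq_of_mul_syllableProd (x : HNNExtension G A B φ) :
    ∃ c l, IsReduced A B l ∧ x = of c * syllableProd φ l := by
  obtain ⟨d⟩ := TransversalPair.nonempty G A B
  let w := NormalWord.equiv φ d x
  exact ⟨w.head, w.toList, w.chain, ((NormalWord.equiv φ d).symm_apply_apply x).symm⟩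

theorem IsReduced.exists_syllableProd_mul_of {l : List (ℤˣ × G)} (hl : IsReduced A B l)
    (hne : l ≠ []) (g : G) :
    ∃ l', IsReduced A B l' ∧ l'.length = l.length ∧
      syllableProd φ l' = syllableProd φ l * of g := by
  obtain ⟨l₀, ⟨u, c⟩, rfl⟩ := List.eq_nil_or_concat' l |>.resolve_left hne
  obtain ⟨hl₀, -, hlast⟩ := List.isChain_append.1 hl
  refine ⟨l₀ ++ [(u, c * g)], List.isChain_append.2 ⟨hl₀, List.isChain_singleton _, ?_⟩,
    by simp, by simp [mul_assoc]⟩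
  simpa using hlast

theorem of_toSubgroupEquiv (u : ℤˣ) (x : toSubgroup A B u) :
    (of (toSubgroupEquiv φ u x : G) : HNNExtension G A B φ) =
      t ^ (u : ℤ) * of (x : G) * (t ^ (u : ℤ))⁻¹ := by
  rcases Int.units_eq_one_or u with rfl | rfl
  · rw [Units.val_one, zpow_one]
    exact equiv_eq_conj x
  · rw [Units.val_neg, Units.val_one, zpow_neg, zpow_one, inv_inv]
    exact equiv_symm_eq_conj x

/-- Both sides are products of reduced words, whose heads `g` and `1` must agree modulo the subgroup
attached to the first occurrence of `t`. -/
theorem IsReduced.mem_toSubgroup_of_of_mul_eq_mul_of {u : ℤˣ} {d g g' : G} {l : List (ℤˣ × G)}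
    (hl : IsReduced A B ((u, d) :: l))
    (h : of g * syllableProd φ ((u, d) :: l) = syllableProd φ ((u, d) :: l) * of g') :
    g ∈ toSubgroup A B (-u) := by
  obtain ⟨l', hl', -, hprod⟩ := hl.exists_syllableProd_mul_of φ (List.cons_ne_nil _ _) g'
  have hwords : ReducedWord.prod φ ⟨g, _, hl⟩ = ReducedWord.prod φ ⟨1, l', hl'⟩ := by
    change of g * syllableProd φ _ = of 1 * syllableProd φ l'
    rw [h, hprod, map_one, one_mul]
  simpa using (ReducedWord.map_fst_eq_and_of_prod_eq φ hwords).2 u (by simp)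

theorem IsCyclicallyReduced.isReduced_flatten_replicate {l : List (ℤˣ × G)}
    (hl : IsCyclicallyReduced A B l) (m : ℕ) : IsReduced A B (List.replicate m l).flatten := by
  rcases eq_or_ne l [] with rfl | hne
  · simp [IsReduced]
  · refine (List.isChain_flatten fun hmem => hne (List.eq_of_mem_replicate hmem).symm).2
      ⟨fun k hk => ?_, List.isChain_replicate_of_rel m hl.2⟩
    exact List.eq_of_mem_replicate hk ▸ hl.1

theorem IsCyclicallyReduced.syllableProd_zpow_notMem_range {l : List (ℤˣ × G)}
    (hl : IsCyclicallyReduced A B l) (hne : l ≠ []) {n : ℤ} (hn : n ≠ 0) :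
    syllableProd φ l ^ n ∉ (of.range : Subgroup (HNNExtension G A B φ)) := by
  intro hmem
  have hpow : syllableProd φ l ^ n.natAbs ∈ (of.range : Subgroup (HNNExtension G A B φ)) := by
    rw [← zpow_natCast, Int.natCast_natAbs]
    rcases abs_choice n with h | h
    · rwa [h]
    · rwa [h, zpow_neg, inv_mem_iff]
  have hnil := ReducedWord.toList_eq_nil_of_mem_of_range φ
    ⟨1, _, hl.isReduced_flatten_replicate n.natAbs⟩ (by
      change of 1 * syllableProd φ _ ∈ _
      rwa [map_one, one_mul, syllableProd_flatten_replicate])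
  simp_all [List.flatten_eq_nil_iff]

theorem IsReduced.exists_pinch_of_not_isCyclicallyReduced {l : List (ℤˣ × G)}
    (hl : IsReduced A B l) (hcyc : ¬ IsCyclicallyReduced A B l) :
    ∃ u d l' c, l = (-u, d) :: (l' ++ [(u, c)]) ∧ c ∈ toSubgroup A B u := by
  have hpinch : ¬ ∀ x ∈ l.getLast?, ∀ y ∈ l.head?, x.2 ∈ toSubgroup A B x.1 → x.1 = y.1 :=
    fun h => hcyc ⟨hl, h⟩
  push Not at hpinch
  obtain ⟨⟨u, c⟩, hlast, ⟨v, d⟩, hhead, hc, huv⟩ := hpinch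
  obtain rfl : v = -u := Int.units_ne_iff_eq_neg.1 huv.symm
  obtain ⟨l₁, rfl⟩ : ∃ l₁, l = (-u, d) :: l₁ := List.head?_eq_some_iff.1 hhead
  rcases List.eq_nil_or_concat' l₁ with rfl | ⟨l', x, rfl⟩
  · simp only [List.getLast?_singleton, Option.mem_def, Option.some.injEq, Prod.mk.injEq] at hlast
    exact absurd hlast.1.symm huv
  · rw [← List.cons_append, Option.mem_def, List.getLast?_concat] at hlast
    obtain rfl := Option.some.inj hlast
    exact ⟨u, d, l', c, rfl, hc⟩

/-- The shorter word comes from conjugating by the first syllable of `l`, which cancels both ends;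
`g` stays in `G` because it commutes with the product of `l`. -/
theorem IsReduced.exists_shorter_of_eq_zpow {l : List (ℤˣ × G)} (hl : IsReduced A B l)
    (hne : l ≠ []) {n : ℤ} (hn : n ≠ 0) {g : G} (h : of g = syllableProd φ l ^ n) :
    ∃ (u : ℤˣ) (x : toSubgroup A B u) (d c : G) (l' : List (ℤˣ × G)), g = x ∧
      IsReduced A B l' ∧ l'.length < l.length ∧
      of (d⁻¹ * toSubgroupEquiv φ u x * d) = (syllableProd φ l' * of c) ^ n := by
  have hcyc : ¬ IsCyclicallyReduced A B l := fun hcyc =>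
    hcyc.syllableProd_zpow_notMem_range φ hne hn ⟨g, h⟩
  obtain ⟨u, d, l', c, rfl, hc⟩ := hl.exists_pinch_of_not_isCyclicallyReduced hcyc
  have hcomm : of g * syllableProd φ ((-u, d) :: (l' ++ [(u, c)])) =
      syllableProd φ ((-u, d) :: (l' ++ [(u, c)])) * of g := by
    rw [h]
    exact (Commute.self_zpow _ n).eq.symm
  have hg : g ∈ toSubgroup A B u := by
    simpa using hl.mem_toSubgroup_of_of_mul_eq_mul_of φ hcomm
  have hl' : IsReduced A B l' := (List.isChain_append.1 (List.isChain_cons.1 hl).2).1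
  refine ⟨u, ⟨g, hg⟩, d, toSubgroupEquiv φ u ⟨c, hc⟩ * d, l', rfl, hl', by simp, ?_⟩
  let y : HNNExtension G A B φ := (of d)⁻¹ * t ^ (u : ℤ)
  calc of (d⁻¹ * toSubgroupEquiv φ u ⟨g, hg⟩ * d)
      = y * of g * y⁻¹ := by
        simp only [y, map_mul, map_inv, of_toSubgroupEquiv]
        group
    _ = (y * syllableProd φ ((-u, d) :: (l' ++ [(u, c)])) * y⁻¹) ^ n := by rw [h, conj_zpow]
    _ = (syllableProd φ l' * of (toSubgroupEquiv φ u ⟨c, hc⟩ * d)) ^ n := by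
        congr 1
        simp only [y, map_mul, of_toSubgroupEquiv, syllableProd_cons, syllableProd_append,
          syllableProd_nil, Units.val_neg, zpow_neg]
        group

end Words

section Roots

variable {G : Type*} [Group G] {A B : Subgroup G} (φ : A ≃* B) {P : G → Prop}

theorem invariant_toSubgroupEquiv (hφ : ∀ x : A, P (φ x) ↔ P x) (u : ℤˣ)
    (x : toSubgroup A B u) (hx : P x) : P (toSubgroupEquiv φ u x) := by
  rcases Int.units_eq_one_or u with rfl | rfl
  · exact (hφ x).2 hx
  · exact (hφ (φ.symm x)).1 ((φ.apply_symm_apply x).symm ▸ hx)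

theorem exists_zpow_of_of_eq_syllableProd_mul_of_zpow (hconj : ∀ c x : G, P x → P (c * x * c⁻¹))
    (hφ : ∀ x : A, P (φ x) ↔ P x) {n : ℤ} (hn : n ≠ 0) {l : List (ℤˣ × G)}
    (hl : IsReduced A B l) {g c : G} (hg : P g) (h : of g = (syllableProd φ l * of c) ^ n) :
    ∃ r : G, P (r ^ n) := by
  induction hk : l.length using Nat.strong_induction_on generalizing l g c with
  | _ k ih =>
    rcases eq_or_ne l [] with rfl | hne
    · have hgc : g = c ^ n := of_injective φ (by simpa using h)
      exact ⟨c, hgc ▸ hg⟩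
    · obtain ⟨l₁, hl₁, hlen, hprod⟩ := hl.exists_syllableProd_mul_of φ hne c
      have hne₁ : l₁ ≠ [] := by
        rwa [ne_eq, ← List.length_eq_zero_iff, hlen, List.length_eq_zero_iff]
      obtain ⟨u, x, d, c', l', rfl, hl', hlt, h'⟩ :=
        hl₁.exists_shorter_of_eq_zpow φ hne₁ hn (h.trans (by rw [hprod]))
      have hP : P (d⁻¹ * toSubgroupEquiv φ u x * d) := by
        simpa using hconj d⁻¹ _ (invariant_toSubgroupEquiv φ hφ u x hg)
      exact ih l'.length (by omega) hl' hP h' rfl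

theorem exists_zpow_of_of_eq_zpow (hconj : ∀ c x : G, P x → P (c * x * c⁻¹))
    (hφ : ∀ x : A, P (φ x) ↔ P x) {g : G} (hg : P g) {h : HNNExtension G A B φ} {n : ℤ}
    (hpow : of g = h ^ n) : ∃ r : G, P (r ^ n) := by
  rcases eq_or_ne n 0 with rfl | hn
  · have hg1 : g = 1 := of_injective φ (by simpa using hpow)
    exact ⟨1, by simpa [hg1] using hg⟩
  · obtain ⟨c, l, hl, rfl⟩ := exists_isReduced_eq_of_mul_syllableProd φ h
    refine exists_zpow_of_of_eq_syllableProd_mul_of_zpow φ hconj hφ hn hl (c := c)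
      (hconj c⁻¹ g hg) ?_
    calc of (c⁻¹ * g * c⁻¹⁻¹)
        = (of c)⁻¹ * (of c * syllableProd φ l) ^ n * (of c)⁻¹⁻¹ := by
          rw [map_mul, map_mul, hpow, map_inv, map_inv, map_inv]
      _ = (syllableProd φ l * of c) ^ n := by
          rw [← conj_zpow, inv_mul_cancel_left, inv_inv]

end Roots

end HNNWord

namespace Primitive

variable {G : Type*} [Group G]

theorem conj {g : G} (hg : Primitive g) (c : G) : Primitive (c * g * c⁻¹) := by
  intro h n e
  refine hg (c⁻¹ * h * c⁻¹⁻¹) n ?_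
  rw [conj_zpow, ← e]
  group

theorem inv {g : G} (hg : Primitive g) : Primitive g⁻¹ := fun h n e =>
  hg h⁻¹ n (by rw [inv_zpow, ← e, inv_inv])

theorem zpow_iff {a : G} (ha : Primitive a) {j : ℤ} : Primitive (a ^ j) ↔ j = 1 ∨ j = -1 := by
  refine ⟨fun h => h a j rfl, ?_⟩
  rintro (rfl | rfl)
  · simpa using ha
  · simpa using ha.inv

theorem zpowers_equiv_apply_iff {H : Type*} [Group H] {a : G} {b : H} (ha : Primitive a)
    (hb : Primitive b) (φ : Subgroup.zpowers a ≃* Subgroup.zpowers b)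
    (hφ : (φ ⟨a, Subgroup.mem_zpowers a⟩ : H) = b) (x : Subgroup.zpowers a) :
    Primitive (φ x : H) ↔ Primitive (x : G) := by
  obtain ⟨j, rfl⟩ : ∃ j : ℤ, (⟨a, Subgroup.mem_zpowers a⟩ : Subgroup.zpowers a) ^ j = x := by
    obtain ⟨j, hj⟩ := x.2
    exact ⟨j, Subtype.ext hj⟩
  simp only [map_zpow, SubgroupClass.coe_zpow, hφ, ha.zpow_iff, hb.zpow_iff]

end Primitive

theorem stmt_9_general {G : Type*} [Group G] {A B : Subgroup G} (φ : A ≃* B)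
    (hφ : ∀ x : A, Primitive (φ x : G) ↔ Primitive (x : G)) {g : G} (hg : Primitive g) :
    Primitive (HNNExtension.of g : HNNExtension G A B φ) := by
  intro h n hpow
  obtain ⟨r, hr⟩ :=
    HNNWord.exists_zpow_of_of_eq_zpow φ (P := Primitive) (fun c _ hx => hx.conj c) hφ hg hpow
  exact hr r n rfl

/-- A primitive element of G remains primitive in the HNN extension G∗_{aᵗ = b} for
primitive elements a, b. -/
theorem stmt_9 {G : Type*} [Group G] (a b : G) (ha : Primitive a) (hb : Primitive b)
    (φ : (Subgroup.zpowers a) ≃* (Subgroup.zpowers b))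
    (hφ : (φ ⟨a, Subgroup.mem_zpowers a⟩ : G) = b)
    (g : G) (hg : Primitive g) :
    Primitive (HNNExtension.of g : HNNExtension G (Subgroup.zpowers a) (Subgroup.zpowers b) φ) :=
  stmt_9_general φ (ha.zpowers_equiv_apply_iff hb φ hφ) hg
end

section
/- Let G be a group, let a, b ∈ G be non-trivial elements and let n, m be integers with |n| ≥ 2 and |m| ≥ 2. Let φ : ⟨a^n⟩ → ⟨b^m⟩ be an isomorphism sending a^n to b^m. Then any primitive element g ∈ G, considered via the canonical embedding as an element of the HNN extension G∗_{φ} = ⟨ G, t ∣ t^{-1} a^n t = b^m ⟩, is still primitive in G∗_{φ}. -/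
section Primitive

variable {G H : Type*} [Group G] [Group H]

theorem Primitive.map_of_centralizer_le_range {f : G →* H} {g : G} (hg : Primitive g)
    (hf : Function.Injective f) (hcentralizer : Subgroup.centralizer {f g} ≤ f.range) :
    Primitive (f g) := by
  intro h n hn
  have hcomm : h ∈ Subgroup.centralizer {f g} := by
    rw [Subgroup.mem_centralizer_singleton_iff, hn]
    exact Commute.self_zpow h n
  obtain ⟨x, rfl⟩ := hcentralizer hcomm
  exact hg x n (hf (by rw [hn, map_zpow]))

theorem Primitive.of_isConj {g x : G} (hg : Primitive g) (hx : IsConj g x) : Primitive x := by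
  obtain ⟨c, rfl⟩ := isConj_iff.1 hx
  have hrange : (MulAut.conj c).toMonoidHom.range = ⊤ :=
    MonoidHom.range_eq_top.2 (MulAut.conj c).surjective
  exact hg.map_of_centralizer_le_range (f := (MulAut.conj c).toMonoidHom)
    (MulAut.conj c).injective (hrange ▸ le_top)

theorem Primitive.notMem_zpowers_zpow {g : G} (hg : Primitive g) (a : G) {n : ℤ} (hn : |n| ≠ 1) :
    g ∉ Subgroup.zpowers (a ^ n) := by
  intro hmem
  obtain ⟨k, hk⟩ := Subgroup.mem_zpowers_iff.1 hmem
  have hroot : g = (a ^ k) ^ n := by rw [← hk, zpow_comm]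
  exact hn (Int.isUnit_iff_abs_eq.1 (Int.isUnit_iff.2 (hg _ n hroot)))

end Primitive

section HNNExtension

open HNNExtension HNNExtension.NormalWord

variable {G : Type*} [Group G] {A B : Subgroup G} {φ : A ≃* B}

theorem exists_reducedWord_prod_eq (h : HNNExtension G A B φ) :
    ∃ w : ReducedWord G A B, w.prod φ = h := by
  obtain ⟨d⟩ := TransversalPair.nonempty G A B
  exact ⟨(NormalWord.equiv φ d h).toReducedWord, (NormalWord.equiv φ d).symm_apply_apply h⟩

theorem exists_reducedWord_prod_eq_mul_of (w : ReducedWord G A B) (hw : w.toList ≠ []) (g : G) :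
    ∃ w' : ReducedWord G A B, w'.prod φ = w.prod φ * of g ∧ w'.head = w.head ∧
      w'.toList.map Prod.fst = w.toList.map Prod.fst := by
  obtain ⟨x, l, chain⟩ := w
  obtain ⟨l, ⟨u, y⟩, rfl⟩ := (List.eq_nil_or_concat l).resolve_left hw
  refine ⟨⟨x, l ++ [(u, y * g)], ?_⟩, ?_, rfl, by simp⟩
  · simpa [List.isChain_append] using chain
  · simp [ReducedWord.prod, mul_assoc]

theorem conj_head_mem_toSubgroup_of_semiconjBy {w : ReducedWord G A B} {g g' : G}
    (hconj : SemiconjBy (w.prod φ) (of g') (of g)) {u : ℤˣ}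
    (hu : u ∈ w.toList.head?.map Prod.fst) :
    w.head⁻¹ * g * w.head ∈ toSubgroup A B (-u) := by
  have hw : w.toList ≠ [] := by
    intro hnil
    simp [hnil] at hu
  obtain ⟨w', hprod, hhead, hletters⟩ := exists_reducedWord_prod_eq_mul_of (φ := φ) w hw g'
  have hleft : ReducedWord.prod φ ⟨g * w.head, w.toList, w.chain⟩ = of g * w.prod φ := by
    simp [ReducedWord.prod, mul_assoc]
  have hu' : u ∈ w'.toList.head?.map Prod.fst := by
    rwa [← List.head?_map, hletters, List.head?_map]
  have hcoset := (ReducedWord.map_fst_eq_and_of_prod_eq φ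
    (hprod.trans (hconj.eq.trans hleft.symm))).2 u hu'
  rwa [hhead, ← mul_assoc] at hcoset

theorem mem_range_of_or_exists_isConj_mem_of_semiconjBy {h : HNNExtension G A B φ} {g g' : G}
    (hconj : SemiconjBy h (of g') (of g)) :
    h ∈ (of : G →* HNNExtension G A B φ).range ∨ ∃ x, IsConj g x ∧ (x ∈ A ∨ x ∈ B) := by
  obtain ⟨⟨x, l, chain⟩, rfl⟩ := exists_reducedWord_prod_eq h
  cases l with
  | nil => exact .inl ⟨x, by simp [ReducedWord.prod]⟩
  | cons letter l =>
    have hmem : x⁻¹ * g * x ∈ toSubgroup A B (-letter.1) :=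
      conj_head_mem_toSubgroup_of_semiconjBy hconj rfl
    refine .inr ⟨x⁻¹ * g * x, isConj_iff.2 ⟨x⁻¹, by rw [inv_inv]⟩, ?_⟩
    rcases Int.units_eq_one_or (-letter.1) with hsign | hsign
    · exact .inl (by rwa [hsign] at hmem)
    · exact .inr (by rwa [hsign] at hmem)

theorem centralizer_of_le_range_of {g : G} (hA : ∀ x, IsConj g x → x ∉ A)
    (hB : ∀ x, IsConj g x → x ∉ B) :
    Subgroup.centralizer {(of g : HNNExtension G A B φ)} ≤ of.range := by
  intro h hh
  have hcomm : SemiconjBy h (of g) (of g) := Subgroup.mem_centralizer_singleton_iff.1 hh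
  refine (mem_range_of_or_exists_isConj_mem_of_semiconjBy hcomm).resolve_right ?_
  rintro ⟨x, hx, hxA | hxB⟩
  exacts [hA x hx hxA, hB x hx hxB]

theorem stmt_10_general (φ : A ≃* B) {g : G} (hg : Primitive g) (hA : ∀ x, IsConj g x → x ∉ A)
    (hB : ∀ x, IsConj g x → x ∉ B) : Primitive (of g : HNNExtension G A B φ) :=
  hg.map_of_centralizer_le_range (of_injective φ) (centralizer_of_le_range_of hA hB)

end HNNExtension

/-- A primitive element of G remains primitive in the HNN extension G∗_{(aⁿ)ᵗ = bᵐ}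
whenever |n|, |m| ≥ 2. -/
theorem stmt_10 {G : Type*} [Group G] (a b : G) (ha : a ≠ 1) (hb : b ≠ 1)
    (n m : ℤ) (hn : 2 ≤ |n|) (hm : 2 ≤ |m|)
    (φ : (Subgroup.zpowers (a ^ n)) ≃* (Subgroup.zpowers (b ^ m)))
    (hφ : (φ ⟨a ^ n, Subgroup.mem_zpowers _⟩ : G) = b ^ m)
    (g : G) (hg : Primitive g) :
    Primitive (HNNExtension.of g :
      HNNExtension G (Subgroup.zpowers (a ^ n)) (Subgroup.zpowers (b ^ m)) φ) :=
  stmt_10_general φ hg (fun _ hx => (hg.of_isConj hx).notMem_zpowers_zpow a (by lia))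
    (fun _ hx => (hg.of_isConj hx).notMem_zpowers_zpow b (by lia))
end
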